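/- The ordering 1589, 1489, 1458, 1457, 4578 of the facets of X′ is a shelling of X′, and the ordering 489, 589, 578, 157 of the facets of A′ is a shelling of A′; in particular both X′ and A′ are shellable. -/

import Mathlib

/-- The facets (maximal faces) of a collection of finite sets. -/
def facets {V : Type*} [DecidableEq V] (Φ : Finset (Finset V)) : Finset (Finset V) :=
  Φ.filter (fun F => ∀ G ∈ Φ, F ⊆ G → F = G)

/-- A list `L = [F_1, …, F_n]` is a shelling of the pure simplicial complex `Δ` if it is
an ordering of the facets of `Δ` without repetition such that for every `j`, the set
`{σ ⊆ F_j : σ ⊄ F_i for all i < j}` has a unique minimal element `R_j` (equivalently,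
a minimum element `R_j`). -/
def IsShelling {V : Type*} [DecidableEq V] (Δ : Finset (Finset V)) (L : List (Finset V)) :
    Prop :=
  L.Nodup ∧ (∀ F, F ∈ L ↔ F ∈ facets Δ) ∧
    ∀ j : Fin L.length, ∃ R : Finset V,
      (R ⊆ L.get j ∧ ∀ i : Fin L.length, i < j → ¬ R ⊆ L.get i) ∧
      (∀ σ : Finset V, σ ⊆ L.get j → (∀ i : Fin L.length, i < j → ¬ σ ⊆ L.get i) → R ⊆ σ)

/-- A pure simplicial complex is shellable if it admits a shelling. -/
def Shellable {V : Type*} [DecidableEq V] (Δ : Finset (Finset V)) : Prop :=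
  ∃ L : List (Finset V), IsShelling Δ L

/-- The simplicial complex generated by a list of facets. -/
def gen (L : List (Finset ℕ)) : Finset (Finset ℕ) :=
  L.toFinset.biUnion Finset.powerset

/-- The simplicial complex `X′` on vertices `{1,4,5,7,8,9}` with five facets. -/
def X' : Finset (Finset ℕ) :=
  gen [{1,5,8,9},{1,4,8,9},{1,4,5,8},{1,4,5,7},{4,5,7,8}]

/-- The simplicial complex `A′`, generated by the triangles 489, 589, 578, 157. -/
def A' : Finset (Finset ℕ) :=
  gen [{4,8,9},{5,8,9},{5,7,8},{1,5,7}]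

/-!
A set of vertices `R ⊆ F_j` lies in every new face `σ` of `F_j` as soon as each `v ∈ R` has its
opposite ridge `F_j \ {v}` inside an earlier facet: were `v ∉ σ`, then `σ` would lie in that ridge
and would not be new. So a shelling is certified by exhibiting, for each `j`, a new face `R_j` with
this ridge property. Purity makes the facets an antichain, hence the facets of the complex they
generate.
-/

section

variable {V : Type*} [DecidableEq V]

theorem mem_facets_iff_maximal {Φ : Finset (Finset V)} {F : Finset V} :
    F ∈ facets Φ ↔ Maximal (· ∈ Φ) F := by
  simp only [facets, Finset.mem_filter, maximal_iff]

theorem facets_biUnion_powerset {S : Finset (Finset V)}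
    (hS : IsAntichain (· ⊆ ·) (S : Set (Finset V))) :
    facets (S.biUnion Finset.powerset) = S := by
  ext F
  have mem_lowerClosure (G : Finset V) :
      G ∈ S.biUnion Finset.powerset ↔ G ∈ lowerClosure (S : Set (Finset V)) := by
    simp
  simp only [mem_facets_iff_maximal, mem_lowerClosure]
  exact hS.maximal_mem_lowerClosure_iff_mem

/-- The faces that `F j` adds to the complex generated by the earlier members of the family, that
is, the set whose minimum is the `R_j` of a shelling. -/
def newFaces {ι : Type*} [LT ι] (F : ι → Finset V) (j : ι) : Set (Finset V) :=
  {σ | σ ⊆ F j ∧ ∀ i, i < j → ¬ σ ⊆ F i}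

theorem isLeast_newFaces_iff {ι : Type*} [LT ι] {F : ι → Finset V} {j : ι} {R : Finset V} :
    IsLeast (newFaces F j) R ↔
      R ∈ newFaces F j ∧ ∀ v ∈ R, ∃ i, i < j ∧ (F j).erase v ⊆ F i := by
  refine and_congr_right fun _ => ⟨fun hmin v hv => ?_, fun hridge σ ⟨hσ, hnew⟩ v hv => ?_⟩
  · by_contra! hridge
    have hR : R ⊆ (F j).erase v := hmin ⟨Finset.erase_subset _ _, hridge⟩
    exact Finset.notMem_erase v _ (hR hv)
  · obtain ⟨i, hij, hi⟩ := hridge v hv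
    by_contra hvσ
    exact hnew i hij ((Finset.subset_erase.mpr ⟨hσ, hvσ⟩).trans hi)

theorem isShelling_of_erase_subset {L : List (Finset V)} (hnodup : L.Nodup)
    (hanti : IsAntichain (· ⊆ ·) {F | F ∈ L}) (R : Fin L.length → Finset V)
    (hnew : ∀ j, R j ∈ newFaces L.get j)
    (hridge : ∀ j, ∀ v ∈ R j, ∃ i, i < j ∧ (L.get j).erase v ⊆ L.get i) :
    IsShelling (L.toFinset.biUnion Finset.powerset) L := by
  refine ⟨hnodup, fun F => ?_, fun j => ?_⟩
  · rw [facets_biUnion_powerset (by rwa [List.coe_toFinset]), List.mem_toFinset]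
  · have hleast : IsLeast (newFaces L.get j) (R j) :=
      isLeast_newFaces_iff.mpr ⟨hnew j, hridge j⟩
    exact ⟨R j, hleast.1, fun σ hσ hσnew => hleast.2 ⟨hσ, hσnew⟩⟩

end

/-- The ordering 1589, 1489, 1458, 1457, 4578 of the facets of `X′` is a shelling of `X′`,
and the ordering 489, 589, 578, 157 of the facets of `A′` is a shelling of `A′`;
in particular both `X′` and `A′` are shellable. -/
theorem X'_A'_shellings :
    IsShelling X' [{1,5,8,9},{1,4,8,9},{1,4,5,8},{1,4,5,7},{4,5,7,8}] ∧
    IsShelling A' [{4,8,9},{5,8,9},{5,7,8},{1,5,7}] ∧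
    Shellable X' ∧ Shellable A' := by
  have hX : IsShelling X' [{1,5,8,9},{1,4,8,9},{1,4,5,8},{1,4,5,7},{4,5,7,8}] := by
    have hpure : {F | F ∈ [{1,5,8,9},{1,4,8,9},{1,4,5,8},{1,4,5,7},{4,5,7,8}]}.Sized 4 := by
      simp [Set.Sized]
    exact isShelling_of_erase_subset (by decide) hpure.isAntichain
      (R := ![∅, {4}, {4,5}, {7}, {7,8}]) (by unfold newFaces; decide) (by decide)
  have hA : IsShelling A' [{4,8,9},{5,8,9},{5,7,8},{1,5,7}] := by
    have hpure : {F | F ∈ [{4,8,9},{5,8,9},{5,7,8},{1,5,7}]}.Sized 3 := by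
      simp [Set.Sized]
    exact isShelling_of_erase_subset (by decide) hpure.isAntichain
      (R := ![∅, {5}, {7}, {1}]) (by unfold newFaces; decide) (by decide)
  exact ⟨hX, hA, ⟨_, hX⟩, ⟨_, hA⟩⟩
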